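/- Let (u, v) be a C² solution of the p-system, let i ∈ {1, 2}, and let x : (t₋, t₀] → ℝ be a characteristic curve of the i-th eigenvalue with t₋ > −∞ finite such that u(t, x(t)) → 0 as t → t₋ (the characteristic reaches the boundary of the hyperbolic region in finite backward time). Then the derivative of the corresponding Riemann invariant satisfies ∂rᵢ/∂x (t, x(t)) ≥ 0 for all t ∈ (t₋, t₀]. -/

import Mathlib

/-!
Write `c = √(-p'(u))`, `λ = ε c` and `W = ∂ₓrᵢ = v_x + λ u_x`. The Riemann invariant is transported,
`∂ₜrᵢ + λ ∂ₓrᵢ = 0`, so `W` solves a Riccati equation along the characteristic. The integrating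
factor `√c` removes its linear term: `z = √c · W` satisfies

  `z' = p''(u) / (4 c^(3/2)) · W² ≥ 0`  (`hasDerivAt_weighted`),

so `z` is nondecreasing in `t`. As `t → tm⁺` the speed `λ` tends to `0`, hence `x` stays bounded
(`characteristic_bounded`) and so does `W`, while `√c → 0`. Thus `z → 0` at `tm`, and monotonicity
gives `z ≥ 0`, that is `W ≥ 0`, on `(tm, t₀]`.

Partial derivatives are written as `fderiv ℝ f z (1, 0)` (time) and `fderiv ℝ f z (0, 1)` (space).
-/

/-- `q(w) = ∫_w^0 √(-p'(s)) ds`. -/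
noncomputable def qfun (p : ℝ → ℝ) (w : ℝ) : ℝ :=
  ∫ s in w..(0:ℝ), Real.sqrt (-(deriv p s))

/-- `(u, v)` solves the p-system `u_t = -v_x`, `v_t = (p(u))_x` on the domain `D`. -/
def PSystem (p : ℝ → ℝ) (u v : ℝ × ℝ → ℝ) (D : Set (ℝ × ℝ)) : Prop :=
  ∀ z ∈ D,
    deriv (fun s => u (s, z.2)) z.1 = -deriv (fun y => v (z.1, y)) z.2 ∧
    deriv (fun s => v (s, z.2)) z.1 = deriv (fun y => p (u (z.1, y))) z.2

lemma hasDerivAt_time {f : ℝ × ℝ → ℝ} (hf : ContDiff ℝ 2 f) (z : ℝ × ℝ) :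
    HasDerivAt (fun s => f (s, z.2)) (fderiv ℝ f z (1, 0)) z.1 := by
  have h : HasFDerivAt f (fderiv ℝ f z) (z.1, z.2) :=
    (hf.differentiable (by norm_num) z).hasFDerivAt
  exact h.comp_hasDerivAt z.1 ((hasDerivAt_id z.1).prodMk (hasDerivAt_const z.1 z.2))

lemma hasDerivAt_space {f : ℝ × ℝ → ℝ} (hf : ContDiff ℝ 2 f) (z : ℝ × ℝ) :
    HasDerivAt (fun y => f (z.1, y)) (fderiv ℝ f z (0, 1)) z.2 := by
  have h : HasFDerivAt f (fderiv ℝ f z) (z.1, z.2) :=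
    (hf.differentiable (by norm_num) z).hasFDerivAt
  exact h.comp_hasDerivAt z.2 ((hasDerivAt_const z.2 z.1).prodMk (hasDerivAt_id z.2))

lemma hasDerivAt_along {f : ℝ × ℝ → ℝ} {x : ℝ → ℝ} {t m : ℝ}
    (hf : DifferentiableAt ℝ f (t, x t)) (hx : HasDerivAt x m t) :
    HasDerivAt (fun s => f (s, x s))
      (fderiv ℝ f (t, x t) (1, 0) + m * fderiv ℝ f (t, x t) (0, 1)) t := by
  have h := hf.hasFDerivAt.comp_hasDerivAt t ((hasDerivAt_id t).prodMk hx)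
  have e : ((1 : ℝ), m) = (1, 0) + m • ((0 : ℝ), (1 : ℝ)) := by simp
  rw [e, map_add, map_smul, smul_eq_mul] at h
  exact h

/-- The partial derivatives of a `C²` function are differentiable, with derivatives given by the
second derivative. -/
lemma hasFDerivAt_partial {f : ℝ × ℝ → ℝ} (hf : ContDiff ℝ 2 f) (z d : ℝ × ℝ) :
    HasFDerivAt (fun y => fderiv ℝ f y d) ((fderiv ℝ (fderiv ℝ f) z).flip d) z := by
  have h : HasFDerivAt (fderiv ℝ f) (fderiv ℝ (fderiv ℝ f) z) z :=
    ((hf.fderiv_right (m := 1) (by norm_num)).differentiable (by norm_num) z).hasFDerivAt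
  have := h.clm_apply (hasFDerivAt_const d z)
  rwa [ContinuousLinearMap.comp_zero, zero_add] at this

lemma snd_fderiv_symm {f : ℝ × ℝ → ℝ} (hf : ContDiff ℝ 2 f) (z d e : ℝ × ℝ) :
    fderiv ℝ (fderiv ℝ f) z d e = fderiv ℝ (fderiv ℝ f) z e d :=
  (hf.contDiffAt.isSymmSndFDerivAt (by simp)) d e

/-- The spatial derivative of `f` along a curve of slope `m`, with the mixed derivative written as
`∂ₓ∂ₜ f` so that the equations of the system can be substituted. -/
lemma hasDerivAt_space_along {f : ℝ × ℝ → ℝ} (hf : ContDiff ℝ 2 f) {x : ℝ → ℝ} {t m : ℝ}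
    (hx : HasDerivAt x m t) :
    HasDerivAt (fun s => fderiv ℝ f (s, x s) (0, 1))
      (fderiv ℝ (fderiv ℝ f) (t, x t) (0, 1) (1, 0)
        + m * fderiv ℝ (fderiv ℝ f) (t, x t) (0, 1) (0, 1)) t := by
  have h0 := hasFDerivAt_partial hf (t, x t) (0, 1)
  have h := hasDerivAt_along (f := fun y => fderiv ℝ f y (0, 1)) h0.differentiableAt hx
  rw [h0.fderiv] at h
  simpa [snd_fderiv_symm hf (t, x t) (1, 0) (0, 1)] using h

lemma hasDerivAt_qfun {p : ℝ → ℝ} (hp : ContDiff ℝ 2 p) (w : ℝ) :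
    HasDerivAt (qfun p) (-Real.sqrt (-(deriv p w))) w := by
  have hc : Continuous fun s => Real.sqrt (-(deriv p s)) :=
    (hp.continuous_deriv (by norm_num)).neg.sqrt
  exact intervalIntegral.integral_hasDerivAt_left (hc.intervalIntegrable _ _)
    (hc.stronglyMeasurableAtFilter _ _) hc.continuousAt

section System

variable {p : ℝ → ℝ} {u v : ℝ × ℝ → ℝ}

lemma hasDerivAt_deriv_p (hp : ContDiff ℝ 2 p) (w : ℝ) :
    HasDerivAt (deriv p) (deriv (deriv p) w) w := by
  have h : ContDiff ℝ 1 (deriv p) :=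
    (contDiff_succ_iff_deriv (n := 1).1 (by simpa [one_add_one_eq_two] using hp)).2.2
  exact (h.differentiable (by norm_num) w).hasDerivAt

lemma neg_deriv_p_pos (hconv : ∀ w : ℝ, 0 < deriv (deriv p) w)
    (hp'0 : deriv p 0 = 0) {w : ℝ} (hw : w < 0) : 0 < -deriv p w := by
  have := strictMono_of_deriv_pos hconv hw
  linarith

lemma psystem_time_u (hu : ContDiff ℝ 2 u) (hv : ContDiff ℝ 2 v)
    (hsys : PSystem p u v Set.univ) (z : ℝ × ℝ) :
    fderiv ℝ u z (1, 0) = -fderiv ℝ v z (0, 1) := by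
  rw [← (hasDerivAt_time hu z).deriv, ← (hasDerivAt_space hv z).deriv]
  exact (hsys z trivial).1

lemma psystem_time_v (hp : ContDiff ℝ 2 p) (hu : ContDiff ℝ 2 u) (hv : ContDiff ℝ 2 v)
    (hsys : PSystem p u v Set.univ) (z : ℝ × ℝ) :
    fderiv ℝ v z (1, 0) = deriv p (u z) * fderiv ℝ u z (0, 1) := by
  have h1 : HasDerivAt (fun y => p (u (z.1, y))) (deriv p (u z) * fderiv ℝ u z (0, 1)) z.2 :=
    HasDerivAt.comp z.2 (h₂ := p) (hp.differentiable (by norm_num) _).hasDerivAt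
      (hasDerivAt_space hu z)
  rw [← (hasDerivAt_time hv z).deriv, ← h1.deriv]
  exact (hsys z trivial).2

lemma psystem_space_time_u (hu : ContDiff ℝ 2 u) (hv : ContDiff ℝ 2 v)
    (hsys : PSystem p u v Set.univ) (z : ℝ × ℝ) :
    fderiv ℝ (fderiv ℝ u) z (0, 1) (1, 0) = -fderiv ℝ (fderiv ℝ v) z (0, 1) (0, 1) := by
  have h1 := hasFDerivAt_partial hu z (1, 0)
  have h2 := (hasFDerivAt_partial hv z (0, 1)).neg
  have e : (fun y => fderiv ℝ u y (1, 0)) = -(fun y => fderiv ℝ v y (0, 1)) :=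
    funext fun y => psystem_time_u hu hv hsys y
  rw [e] at h1
  simpa using DFunLike.congr_fun (h1.unique h2) (0, 1)

lemma psystem_space_time_v (hp : ContDiff ℝ 2 p) (hu : ContDiff ℝ 2 u) (hv : ContDiff ℝ 2 v)
    (hsys : PSystem p u v Set.univ) (z : ℝ × ℝ) :
    fderiv ℝ (fderiv ℝ v) z (0, 1) (1, 0)
      = deriv (deriv p) (u z) * fderiv ℝ u z (0, 1) ^ 2
        + deriv p (u z) * fderiv ℝ (fderiv ℝ u) z (0, 1) (0, 1) := by
  have h1 := hasFDerivAt_partial hv z (1, 0)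
  have h2 := ((hasDerivAt_deriv_p hp (u z)).comp_hasFDerivAt z
    (hu.differentiable (by norm_num) z).hasFDerivAt).mul (hasFDerivAt_partial hu z (0, 1))
  have e : (fun y => fderiv ℝ v y (1, 0)) = (deriv p ∘ u) * (fun y => fderiv ℝ u y (0, 1)) :=
    funext fun y => psystem_time_v hp hu hv hsys y
  rw [e] at h1
  have := DFunLike.congr_fun (h1.unique h2) (0, 1)
  simp at this
  rw [this]
  ring

/-- The weighted derivative `z = √c · ∂ₓrᵢ` of the Riemann invariant along a characteristic has
nonnegative derivative `p''(u) (∂ₓrᵢ)² / (4 c^(3/2))`; here `√c = √√(-p'(u))`. -/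
lemma hasDerivAt_weighted (hp : ContDiff ℝ 2 p) (hu : ContDiff ℝ 2 u) (hv : ContDiff ℝ 2 v)
    (hsys : PSystem p u v Set.univ) {ε : ℝ} (hε : ε = 1 ∨ ε = -1) {x : ℝ → ℝ} {t : ℝ}
    (hpos : 0 < -deriv p (u (t, x t)))
    (hx : HasDerivAt x (ε * √(-(deriv p (u (t, x t))))) t) :
    HasDerivAt (fun s => √√(-(deriv p (u (s, x s)))) *
        (fderiv ℝ v (s, x s) (0, 1)
          + ε * √(-(deriv p (u (s, x s)))) * fderiv ℝ u (s, x s) (0, 1)))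
      (deriv (deriv p) (u (t, x t)) / (4 * √√(-(deriv p (u (t, x t)))) ^ 3) *
        (fderiv ℝ v (t, x t) (0, 1)
          + ε * √(-(deriv p (u (t, x t)))) * fderiv ℝ u (t, x t) (0, 1)) ^ 2) t := by
  have hU := hasDerivAt_along (hu.differentiable (by norm_num) (t, x t)) hx
  have ha := hasDerivAt_space_along hu hx
  have hb := hasDerivAt_space_along hv hx
  have hg := (HasDerivAt.comp t (h₂ := deriv p) (hasDerivAt_deriv_p hp _) hU).neg
  have hc := hg.sqrt hpos.ne'
  have hcpos : 0 < √(-(deriv p (u (t, x t)))) := Real.sqrt_pos.2 hpos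
  have hs := hc.sqrt hcpos.ne'
  have hz := hs.mul (hb.add ((hc.const_mul ε).mul ha))
  refine hz.congr_deriv ?_
  simp only [Function.comp, Pi.neg_apply, Pi.add_apply, Pi.mul_apply]
  rw [psystem_space_time_u hu hv hsys, psystem_space_time_v hp hu hv hsys,
    psystem_time_u hu hv hsys]
  have hspos : 0 < √√(-(deriv p (u (t, x t)))) := Real.sqrt_pos.2 hcpos
  have e1 := Real.sq_sqrt hcpos.le
  have e2 := Real.sq_sqrt hpos.le
  generalize √√(-(deriv p (u (t, x t)))) = s at *
  generalize √(-(deriv p (u (t, x t)))) = c at *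
  obtain rfl : c = s ^ 2 := e1.symm
  have e3 : deriv p (u (t, x t)) = -(s ^ 2) ^ 2 := by linarith
  rw [e3]
  generalize fderiv ℝ (fderiv ℝ u) (t, x t) (0, 1) (0, 1) = A
  generalize fderiv ℝ (fderiv ℝ v) (t, x t) (0, 1) (0, 1) = B
  generalize fderiv ℝ u (t, x t) (0, 1) = a
  generalize fderiv ℝ v (t, x t) (0, 1) = b
  generalize deriv (deriv p) (u (t, x t)) = P
  rcases hε with rfl | rfl <;> field_simp <;> ring

/-- Near `tm` the speed of the characteristic is at most `1`, so `x` stays bounded. -/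
lemma characteristic_bounded {ε : ℝ} (hε : ε = 1 ∨ ε = -1) {tm t₀ : ℝ} (ht : tm < t₀) {x : ℝ → ℝ}
    (hchar : ∀ t ∈ Set.Ioc tm t₀, HasDerivAt x (ε * √(-(deriv p (u (t, x t))))) t)
    (hlim : Filter.Tendsto (fun t => √(-(deriv p (u (t, x t))))) (nhdsWithin tm (Set.Ioi tm))
      (nhds 0)) :
    ∃ M, ∀ᶠ t in nhdsWithin tm (Set.Ioi tm), x t ∈ Set.Icc (-M) M := by
  have h1 : ∀ᶠ t in nhdsWithin tm (Set.Ioi tm), √(-(deriv p (u (t, x t)))) < 1 :=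
    hlim.eventually_lt_const one_pos
  have h2 : ∀ᶠ t in nhdsWithin tm (Set.Ioi tm), t < t₀ :=
    Filter.Eventually.filter_mono nhdsWithin_le_nhds (eventually_lt_nhds ht)
  obtain ⟨t₁, ht₁, hsub⟩ := (mem_nhdsGT_iff_exists_Ioc_subset).1 (h1.and h2)
  refine ⟨|x t₁| + (t₁ - tm), ?_⟩
  filter_upwards [Ioc_mem_nhdsGT ht₁] with t htt
  have hb := (convex_Ioc tm t₁).norm_image_sub_le_of_norm_hasDerivWithin_le (C := 1) (f := x)
    (f' := fun t => ε * √(-(deriv p (u (t, x t)))))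
    (fun s hs => (hchar s ⟨hs.1, (hsub hs).2.le⟩).hasDerivWithinAt)
    (fun s hs => by
      have habs : |ε| = 1 := by
        rcases hε with h | h <;> simp [h]
      rw [norm_mul, Real.norm_eq_abs, habs, one_mul, Real.norm_of_nonneg (Real.sqrt_nonneg _)]
      exact (hsub hs).1.le)
    (Set.right_mem_Ioc.2 ht₁) htt
  rw [one_mul, Real.norm_eq_abs, Real.norm_eq_abs, abs_of_nonpos (sub_nonpos.2 htt.2 : t - t₁ ≤ 0)] at hb
  rw [Set.mem_Icc, ← abs_le]
  have := abs_sub_abs_le_abs_sub (x t) (x t₁)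
  linarith [htt.1]

end System

/-- Lemma 2.1(1), backward time: if a characteristic curve of the `i`-th eigenvalue
(`ε = 1` for `i = 1`, `ε = -1` for `i = 2`, eigenvalue `λᵢ(u) = ε√(-p'(u))`,
Riemann invariant `rᵢ = v - ε·q(u)`) reaches the boundary of the hyperbolic region
in finite backward time `tm`, then `∂rᵢ/∂x (t, x(t)) ≥ 0` on `(tm, t₀]`. -/
theorem psystem_characteristic_reaching_boundary_backward
    (p : ℝ → ℝ) (hp : ContDiff ℝ 2 p) (hconv : ∀ w : ℝ, 0 < deriv (deriv p) w)
    (hp0 : p 0 = 0) (hp'0 : deriv p 0 = 0)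
    (u v : ℝ × ℝ → ℝ) (hu : ContDiff ℝ 2 u) (hv : ContDiff ℝ 2 v)
    (hsys : PSystem p u v Set.univ)
    (ε : ℝ) (hε : ε = 1 ∨ ε = -1)
    (tm t₀ : ℝ) (ht : tm < t₀) (x : ℝ → ℝ)
    (hhyp : ∀ t ∈ Set.Ioc tm t₀, u (t, x t) < 0)
    (hchar : ∀ t ∈ Set.Ioc tm t₀,
      HasDerivAt x (ε * Real.sqrt (-(deriv p (u (t, x t))))) t)
    (hreach : Filter.Tendsto (fun t => u (t, x t))
      (nhdsWithin tm (Set.Ioi tm)) (nhds 0)) :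
    ∀ t ∈ Set.Ioc tm t₀,
      0 ≤ deriv (fun y => v (t, y) - ε * qfun p (u (t, y))) (x t) := by
  have hpos : ∀ t ∈ Set.Ioc tm t₀, 0 < -deriv p (u (t, x t)) := fun t h =>
    neg_deriv_p_pos hconv hp'0 (hhyp t h)
  have hclim : Filter.Tendsto (fun t => √(-(deriv p (u (t, x t)))))
      (nhdsWithin tm (Set.Ioi tm)) (nhds 0) := by
    have hc : Continuous fun w => √(-(deriv p w)) :=
      (hp.continuous_deriv (by norm_num)).neg.sqrt
    simpa [hp'0, Function.comp_def] using (hc.tendsto 0).comp hreach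
  have hslim : Filter.Tendsto (fun t => √√(-(deriv p (u (t, x t)))))
      (nhdsWithin tm (Set.Ioi tm)) (nhds 0) := by
    simpa using hclim.sqrt
  set W : ℝ → ℝ := fun s => fderiv ℝ v (s, x s) (0, 1)
      + ε * √(-(deriv p (u (s, x s)))) * fderiv ℝ u (s, x s) (0, 1) with hW
  set Z : ℝ → ℝ := fun s => √√(-(deriv p (u (s, x s)))) * W s with hZ
  have hZd := fun t (h : t ∈ Set.Ioc tm t₀) =>
    hasDerivAt_weighted hp hu hv hsys hε (hpos t h) (hchar t h)
  have hmono : MonotoneOn Z (Set.Ioc tm t₀) := by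
    refine monotoneOn_of_deriv_nonneg (convex_Ioc _ _)
      (fun t h => (hZd t h).continuousAt.continuousWithinAt)
      (fun t h => (hZd t (interior_subset h)).differentiableAt.differentiableWithinAt)
      (fun t h => ?_)
    rw [(hZd t (interior_subset h)).deriv]
    have := hconv (u (t, x t))
    positivity
  have hZlim : Filter.Tendsto Z (nhdsWithin tm (Set.Ioi tm)) (nhds 0) := by
    obtain ⟨M, hM⟩ := characteristic_bounded hε ht hchar hclim
    -- On a compact box containing the curve near `tm`, the continuous function `∂ₓrᵢ` is bounded.
    have hcu : Continuous fun z => fderiv ℝ u z (0, 1) :=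
      (hu.continuous_fderiv (by norm_num)).clm_apply continuous_const
    have hcv : Continuous fun z => fderiv ℝ v z (0, 1) :=
      (hv.continuous_fderiv (by norm_num)).clm_apply continuous_const
    have hcW : Continuous fun z : ℝ × ℝ => fderiv ℝ v z (0, 1)
        + ε * √(-(deriv p (u z))) * fderiv ℝ u z (0, 1) :=
      hcv.add ((continuous_const.mul
        (((hp.continuous_deriv (by norm_num)).comp hu.continuous).neg.sqrt)).mul hcu)
    obtain ⟨C, hC⟩ := (isCompact_Icc.prod isCompact_Icc :
      IsCompact (Set.Icc tm t₀ ×ˢ Set.Icc (-M) M)).exists_bound_of_continuousOn hcW.continuousOn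
    refine Filter.Tendsto.zero_mul_isBoundedUnder_le hslim ?_
    refine ⟨C, ?_⟩
    rw [Filter.eventually_map]
    filter_upwards [hM, Ioc_mem_nhdsGT ht] with t h1 h2
    exact hC (t, x t) ⟨⟨h2.1.le, h2.2⟩, h1⟩
  intro t htt
  have hZ0 : 0 ≤ Z t := by
    refine le_of_tendsto hZlim ?_
    filter_upwards [Ioc_mem_nhdsGT htt.1] with s hs
    exact hmono ⟨hs.1, hs.2.trans htt.2⟩ htt hs.2
  have hW0 : 0 ≤ W t :=
    nonneg_of_mul_nonneg_right hZ0 (Real.sqrt_pos.2 (Real.sqrt_pos.2 (hpos t htt)))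
  have hd : HasDerivAt (fun y => v (t, y) - ε * qfun p (u (t, y))) (W t) (x t) := by
    have h1 := hasDerivAt_space hv (t, x t)
    have h2 := HasDerivAt.comp (x t) (h₂ := qfun p) (hasDerivAt_qfun hp (u (t, x t)))
      (hasDerivAt_space hu (t, x t))
    refine (h1.sub (h2.const_mul ε)).congr_deriv ?_
    simp only [hW]
    ring
  rw [hd.deriv]
  exact hW0
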